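/- Let B be a real n×1 column vector, K a real 1×n row vector, E a real n×n matrix, q ≥ 1, and for each integer k ≥ 0 let ℓ_k ∈ ℝ^q be a column vector with ℓ_kᵀ·𝟙 = 1. Let x : ℕ → ℝ^{qn} satisfy the recursion x[k+1] = (I_q ⊗ ((I_n − B·K)·E) + 𝟙ℓ_kᵀ ⊗ ((B·K)·E)) · x[k]. Then for every k and every index i ∈ {1,…,q}, the i-th block x_i ∈ ℝ^n of x satisfies x_i[k+1] = (I_n − B·K)·E·x_i[k] + (ℓ_kᵀ ⊗ ((B·K)·E))·x[k], and consequently for every pair (i, j) the error e_{ij}[k] := x_i[k] − x_j[k] evolves as e_{ij}[k+1] = (I_n − B·K)·E·e_{ij}[k]. -/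

import Mathlib

open Matrix Kronecker

/-- The all-ones column vector `𝟙 ∈ ℝ^q`, as a `q×1` matrix. -/
def onesCol (q : ℕ) : Matrix (Fin q) (Fin 1) ℝ := Matrix.of fun _ _ => 1

/-- blockwise form of the time-varying recursion
`x[k+1] = (I ⊗ (I-BK)E + 𝟙ℓₖᵀ ⊗ (BK)E) x[k]`, and the induced autonomous
error dynamics `e_{ij}[k+1] = (I-BK)E e_{ij}[k]`. -/
theorem blockwise_recursion_and_error_dynamics {q n : ℕ} (hq : 1 ≤ q)
    (B : Matrix (Fin n) (Fin 1) ℝ) (K : Matrix (Fin 1) (Fin n) ℝ)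
    (E : Matrix (Fin n) (Fin n) ℝ)
    (ℓ : ℕ → Matrix (Fin q) (Fin 1) ℝ) (hℓ : ∀ k, (ℓ k)ᵀ * onesCol q = 1)
    (x : ℕ → Fin q × Fin n → ℝ)
    (hx : ∀ k, x (k + 1) =
      ((1 : Matrix (Fin q) (Fin q) ℝ) ⊗ₖ ((1 - B * K) * E) +
        (onesCol q * (ℓ k)ᵀ) ⊗ₖ ((B * K) * E)) *ᵥ x k) :
    (∀ k, ∀ i : Fin q, ∀ t : Fin n,
      x (k + 1) (i, t) =
        (((1 - B * K) * E) *ᵥ fun s => x k (i, s)) t +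
          (((ℓ k)ᵀ ⊗ₖ ((B * K) * E)) *ᵥ x k) (0, t)) ∧
    ∀ k, ∀ i j : Fin q,
      (fun t => x (k + 1) (i, t) - x (k + 1) (j, t)) =
        ((1 - B * K) * E) *ᵥ fun t => x k (i, t) - x k (j, t) := by
  have key : ∀ k, ∀ i : Fin q, ∀ t : Fin n,
      x (k + 1) (i, t) =
        (((1 - B * K) * E) *ᵥ fun s => x k (i, s)) t +
          (((ℓ k)ᵀ ⊗ₖ ((B * K) * E)) *ᵥ x k) (0, t) := by
    intro k i t
    rw [hx k, Matrix.add_mulVec, Pi.add_apply]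
    generalize (1 - B * K) * E = M
    generalize (B * K) * E = N
    congr 1
    · simp only [Matrix.mulVec, dotProduct, Fintype.sum_prod_type, Matrix.kroneckerMap_apply]
      rw [Finset.sum_eq_single i]
      · simp
      · intro b _ hb
        simp [Matrix.one_apply_ne hb.symm]
      · simp
    · simp [Matrix.mulVec, dotProduct, Matrix.kroneckerMap_apply, Matrix.mul_apply, onesCol]
  refine ⟨key, ?_⟩
  intro k i j
  funext t
  rw [key k i t, key k j t, add_sub_add_right_eq_sub]
  have h := congrFun (Matrix.mulVec_sub ((1 - B * K) * E)
    (fun s => x k (i, s)) (fun s => x k (j, s))) t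
  exact h.symm
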